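/- Let μ ∈ ℝ, set α := −iμ/2, and let u : ℝ → ℂ be a smooth solution of the PII equation u''(x) = x·u(x) + 2·u(x)³ − α on ℝ, taking purely imaginary values on ℝ and satisfying the asymptotic expansion (A+): there exist x₀, K > 0 such that |u(x) − α/x − 2α(1−α²)·x^{−4} − 4α(1−α²)(10−3α²)·x^{−7}| ≤ K·x^{−10} for all x ≥ x₀. Define w(x) := ∫₀ˣ exp( (2/3^{1/3}) ∫₀^y u(z/3^{1/3}) dz ) dy − C with C := (2·3^{1/3}/(1−iμ))·(u'(0) − u(0)²), g(x) := e^{iμ·ln|x|}·w(x)/x for x ≠ 0, and let g₊ := lim_{x→+∞} g(x) (which exists). Then w'(x)·e^{iμ·ln x} = (1−iμ)·g₊ + (2+iμ)·(1−iμ)·g₊·(iμ + μ²/2)·x^{−3} + O(x^{−6}) as x → +∞. -/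

import Mathlib

/-!
By the fundamental theorem of calculus `w' = exp E` with `E' x = (2/c) u (x/c)`, `c = 3^{1/3}`.
Inserting the expansion of `u` and `c³ = 3`, one finds
`E' x = -iμ/x - 3b/x⁴ + O(x⁻⁷)` with `b = 2iμ + iμ³/2 = (2+iμ)(iμ + μ²/2)`.
A function whose derivative is `O(x⁻⁷)` has a limit `L` that it approaches at rate `O(x⁻⁶)`
(`exists_limit_of_deriv_bound`), so `E x + iμ ln x = L + b/x³ + O(x⁻⁶)`, and exponentiating
(`exp_expansion`) gives `w' x * e^{iμ ln x} = A (1 + b/x³ + O(x⁻⁶))` with `A = e^L`.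

It remains to identify `A`. The difference `w x - A/(1-iμ) * x e^{-iμ ln x}` has derivative
`O(x⁻³)`, hence is bounded; so `g x → A/(1-iμ)`, that is `A = (1-iμ) g₊`
(`limit_identification`).
-/

/-- The real cube root of 3. -/
noncomputable def cbrt3 : ℝ := (3 : ℝ) ^ ((1:ℝ)/3)

open Filter Topology

/-! ### Asymptotics from derivative bounds -/

/-- A function with derivative `O(x⁻ⁿ⁻²)` on `[x₀, ∞)` converges at rate `O(x⁻ⁿ⁻¹)`. -/
lemma exists_limit_of_deriv_bound (n : ℕ) (x₀ K : ℝ) (hx₀ : 0 < x₀) (hK : 0 ≤ K)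
    (F F' : ℝ → ℂ) (hF : ∀ x, x₀ ≤ x → HasDerivAt F (F' x) x)
    (hb : ∀ x, x₀ ≤ x → ‖F' x‖ ≤ K * (n + 1) / x ^ (n + 2)) :
    ∃ L : ℂ, ∀ x, x₀ ≤ x → ‖F x - L‖ ≤ K / x ^ (n + 1) := by
  have key : ∀ x y, x₀ ≤ x → x ≤ y → ‖F y - F x‖ ≤ K / x ^ (n + 1) := by
    intro x y hx hxy
    have hxpos : 0 < x := hx₀.trans_le hx
    have hB : ∀ t ∈ Set.Icc x y, HasDerivAt (fun t : ℝ => K / x ^ (n + 1) - K / t ^ (n + 1))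
        (K * (n + 1) / t ^ (n + 2)) t := by
      intro t ht
      have ht0 : 0 < t := hxpos.trans_le ht.1
      have h1 := ((hasDerivAt_pow (n + 1) t).inv (pow_pos ht0 _).ne').const_mul K
      have h2 := h1.const_sub (K / x ^ (n + 1))
      refine (h2.congr_deriv ?_)
      push_cast
      field_simp
      try simp only [Nat.add_sub_cancel]
      try ring
    have h := image_norm_le_of_norm_deriv_right_le_deriv_boundary'
      (f := fun t => F t - F x) (f' := F') (a := x) (b := y)
      (B := fun t : ℝ => K / x ^ (n + 1) - K / t ^ (n + 1))
      (B' := fun t => K * (n + 1) / t ^ (n + 2))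
      (fun t ht => ((hF t (hx.trans ht.1)).sub_const _).continuousAt.continuousWithinAt)
      (fun t ht => ((hF t (hx.trans ht.1)).sub_const _).hasDerivWithinAt)
      (by simp)
      (fun t ht => (hB t ht).continuousAt.continuousWithinAt)
      (fun t ht => (hB t ⟨ht.1, ht.2.le⟩).hasDerivWithinAt)
      (fun t ht => hb t (hx.trans ht.1))
      (Set.right_mem_Icc.2 hxy)
    have : 0 ≤ K / y ^ (n + 1) := by
      have : 0 < y := hxpos.trans_le hxy
      positivity
    linarith
  have hlim : Tendsto (fun N : ℝ => 2 * (K / (max N x₀) ^ (n + 1))) atTop (𝓝 0) := by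
    have h1 : Tendsto (fun N : ℝ => max N x₀) atTop atTop :=
      tendsto_atTop_mono (fun N => le_max_left _ _) tendsto_id
    have h2 := ((tendsto_pow_atTop (α := ℝ) (Nat.succ_ne_zero n)).comp h1).const_div_atTop K
    simpa using h2.const_mul 2
  have hC : CauchySeq (fun x : ℝ => F (max x x₀)) := by
    refine cauchySeq_of_le_tendsto_0 _ ?_ hlim
    intro a b N ha hb
    have h1 := key (max N x₀) (max a x₀) (le_max_right _ _) (max_le_max_right _ ha)
    have h2 := key (max N x₀) (max b x₀) (le_max_right _ _) (max_le_max_right _ hb)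
    rw [← dist_eq_norm] at h1 h2
    have := dist_triangle_right (F (max a x₀)) (F (max b x₀)) (F (max N x₀))
    linarith
  obtain ⟨L, hL⟩ := cauchySeq_tendsto_of_complete hC
  refine ⟨L, fun x hx => ?_⟩
  have h := (hL.sub_const (F x)).norm
  rw [norm_sub_rev]
  refine le_of_tendsto h ?_
  filter_upwards [eventually_ge_atTop x] with y hy
  exact key x _ hx (hy.trans (le_max_left _ _))

/-- Exponentiating `h = L + b/x³ + O(x⁻⁶)`. -/
lemma exp_expansion (h : ℝ → ℂ) (b L : ℂ) (x₀ K : ℝ) (hK : 0 ≤ K)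
    (hh : ∀ x, x₀ ≤ x → ‖h x - b / (x : ℂ) ^ 3 - L‖ ≤ K / x ^ 6) :
    ∃ x₁ : ℝ, x₀ ≤ x₁ ∧ 1 ≤ x₁ ∧ ∃ K' : ℝ, 0 < K' ∧ ∀ x, x₁ ≤ x →
      ‖Complex.exp (h x) - Complex.exp L - Complex.exp L * b / (x : ℂ) ^ 3‖ ≤ K' / x ^ 6 := by
  set M := ‖b‖ + K with hM
  have hM0 : 0 ≤ M := by positivity
  refine ⟨max x₀ (1 + M), le_max_left _ _, le_max_of_le_right (by linarith),
    ‖Complex.exp L‖ * (M ^ 2 + K + 1), ?_, ?_⟩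
  · have : 0 < ‖Complex.exp L‖ := norm_pos_iff.2 (Complex.exp_ne_zero _)
    positivity
  intro x hx
  have hx0 : x₀ ≤ x := (le_max_left _ _).trans hx
  have hxM : 1 + M ≤ x := (le_max_right _ _).trans hx
  have hx1 : 1 ≤ x := by linarith
  have hxp : 0 < x := by linarith
  set r := h x - b / (x : ℂ) ^ 3 - L with hr
  have hr1 : ‖r‖ ≤ K / x ^ 6 := hh x hx0
  set z := b / (x : ℂ) ^ 3 + r with hz
  have hx36 : x ^ 3 ≤ x ^ 6 := pow_le_pow_right₀ hx1 (by norm_num)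
  have hb1 : ‖b / (x : ℂ) ^ 3‖ = ‖b‖ / x ^ 3 := by
    simp [abs_of_pos hxp]
  have hzn : ‖z‖ ≤ M / x ^ 3 := by
    calc ‖z‖ ≤ ‖b‖ / x ^ 3 + K / x ^ 6 := by
          rw [← hb1]; exact (norm_add_le _ _).trans (by gcongr)
      _ ≤ ‖b‖ / x ^ 3 + K / x ^ 3 := by gcongr
      _ = M / x ^ 3 := by rw [hM]; ring
  have hz1 : ‖z‖ ≤ 1 := by
    refine hzn.trans ((div_le_one (by positivity)).2 ?_)
    have : x ≤ x ^ 3 := le_self_pow₀ hx1 (by norm_num)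
    linarith
  have hexp := Complex.norm_exp_sub_one_sub_id_le hz1
  have heq : Complex.exp (h x) - Complex.exp L - Complex.exp L * b / (x : ℂ) ^ 3
      = Complex.exp L * ((Complex.exp z - 1 - z) + r) := by
    have : h x = L + z := by rw [hz, hr]; ring
    rw [this, Complex.exp_add, hz]; ring
  rw [heq, norm_mul]
  have : ‖(Complex.exp z - 1 - z) + r‖ ≤ (M ^ 2 + K + 1) / x ^ 6 := by
    calc _ ≤ ‖z‖ ^ 2 + K / x ^ 6 := (norm_add_le _ _).trans (by gcongr)
      _ ≤ (M / x ^ 3) ^ 2 + K / x ^ 6 := by gcongr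
      _ = (M ^ 2 + K) / x ^ 6 := by field_simp
      _ ≤ _ := div_le_div_of_nonneg_right (by linarith) (by positivity)
  calc _ ≤ ‖Complex.exp L‖ * ((M ^ 2 + K + 1) / x ^ 6) := by gcongr
    _ = _ := by ring

/-! ### Identification of the leading coefficient -/

lemma norm_exp_log (μ x : ℝ) : ‖Complex.exp (Complex.I * μ * Real.log x)‖ = 1 := by
  have : Complex.I * μ * Real.log x = ((μ * Real.log x : ℝ) : ℂ) * Complex.I := by
    push_cast; ring
  rw [this, Complex.norm_exp_ofReal_mul_I]

lemma hasDerivAt_mu_log (μ x : ℝ) (hx : x ≠ 0) :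
    HasDerivAt (fun x : ℝ => Complex.I * μ * (Real.log x : ℂ)) (Complex.I * μ / x) x := by
  have h := ((Real.hasDerivAt_log hx).ofReal_comp).const_mul (Complex.I * (μ : ℂ))
  refine h.congr_deriv ?_
  push_cast
  rw [div_eq_mul_inv]

lemma one_sub_I_mul_ne_zero (μ : ℝ) : (1 : ℂ) - Complex.I * μ ≠ 0 := by
  intro h
  have := congrArg Complex.re h
  simp at this

/-- If `w' x * e^{iμ ln x} = A + O(x⁻³)`, then `e^{iμ ln x} w x / x → A/(1-iμ)`. -/
lemma limit_identification (μ : ℝ) (w w' : ℝ → ℂ) (A : ℂ) (x₀ K : ℝ) (hx₀ : 0 < x₀)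
    (hK : 0 ≤ K) (hw : ∀ x, HasDerivAt w (w' x) x)
    (hA : ∀ x, x₀ ≤ x →
      ‖w' x * Complex.exp (Complex.I * μ * Real.log x) - A‖ ≤ K / x ^ 3) :
    Tendsto (fun x : ℝ => Complex.exp (Complex.I * μ * Real.log x) * w x / x) atTop
      (𝓝 (A / (1 - Complex.I * μ))) := by
  have hne := one_sub_I_mul_ne_zero μ
  set e : ℝ → ℂ := fun x => Complex.exp (Complex.I * μ * Real.log x) with he
  have hen : ∀ x, ‖e x‖ = 1 := fun x => norm_exp_log μ x
  have he0 : ∀ x, e x ≠ 0 := fun x => Complex.exp_ne_zero _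
  set v : ℝ → ℂ := fun x => w x - A / (1 - Complex.I * μ) * ((x : ℂ) * (e x)⁻¹) with hv
  have hvd : ∀ x, x₀ ≤ x → HasDerivAt v (w' x - A * (e x)⁻¹) x := by
    intro x hx
    have hxp : x ≠ 0 := (hx₀.trans_le hx).ne'
    have hxc : (x : ℂ) ≠ 0 := by exact_mod_cast hxp
    have h1 : HasDerivAt e (e x * (Complex.I * μ / x)) x := (hasDerivAt_mu_log μ x hxp).cexp
    have h2 := ((hasDerivAt_id x).ofReal_comp.mul (h1.inv (he0 x))).const_mul
      (A / (1 - Complex.I * μ))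
    have h3 := (hw x).sub h2
    refine h3.congr_deriv ?_
    have := he0 x
    simp only [id, Complex.ofReal_one, Pi.inv_apply]
    field_simp
    try ring
  obtain ⟨L, hL⟩ := exists_limit_of_deriv_bound 1 x₀ K hx₀ hK v _ hvd (by
    intro x hx
    have hxp : 0 < x := hx₀.trans_le hx
    have h1 : w' x - A * (e x)⁻¹ = (w' x * e x - A) * (e x)⁻¹ := by
      have := he0 x
      field_simp
    rw [h1, norm_mul, norm_inv, hen, inv_one, mul_one]
    refine (hA x hx).trans ?_
    norm_num
    gcongr
    linarith)
  have hlim : Tendsto (fun x : ℝ => e x * v x / x) atTop (𝓝 0) := by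
    have hb : Tendsto (fun x : ℝ => (‖L‖ + K / x₀ ^ 2) / x) atTop (𝓝 0) :=
      tendsto_id.const_div_atTop _
    refine squeeze_zero_norm' ?_ hb
    filter_upwards [eventually_ge_atTop x₀] with x hx
    have hxp : 0 < x := hx₀.trans_le hx
    rw [norm_div, norm_mul, hen, one_mul, Complex.norm_real, Real.norm_of_nonneg hxp.le]
    gcongr
    have h1 := hL x hx
    have h2 : K / x ^ (1 + 1) ≤ K / x₀ ^ 2 := by norm_num; gcongr
    have h3 := norm_add_le (v x - L) L
    rw [sub_add_cancel] at h3
    linarith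
  have h := hlim.const_add (A / (1 - Complex.I * μ))
  rw [add_zero] at h
  refine h.congr' ?_
  filter_upwards [eventually_ge_atTop x₀] with x hx
  have hxc : (x : ℂ) ≠ 0 := by exact_mod_cast (hx₀.trans_le hx).ne'
  have := he0 x
  simp only [hv]
  field_simp
  try ring

/-! ### Expansion of the exponent -/

lemma cbrt3_pos : 0 < cbrt3 := Real.rpow_pos_of_pos (by norm_num) _

lemma cbrt3_cube : cbrt3 ^ 3 = 3 := by
  rw [cbrt3, ← Real.rpow_natCast, ← Real.rpow_mul (by norm_num)]
  norm_num

/-- The exponent in the definition of `w`. -/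
noncomputable def expo (u : ℝ → ℂ) (y : ℝ) : ℂ :=
  ((2 / cbrt3 : ℝ) : ℂ) * ∫ z in (0:ℝ)..y, u (z / cbrt3)

lemma hasDerivAt_expo (u : ℝ → ℂ) (hu : Continuous u) (x : ℝ) :
    HasDerivAt (expo u) (((2 / cbrt3 : ℝ) : ℂ) * u (x / cbrt3)) x := by
  have hc : Continuous (fun z : ℝ => u (z / cbrt3)) := hu.comp (continuous_id.div_const _)
  exact (hc.integral_hasStrictDerivAt 0 x).hasDerivAt.const_mul _

/-- The error in `E' x = -iμ/x - 3b/x⁴ + O(x⁻⁷)`, with constants in the shape required by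
`exists_limit_of_deriv_bound` for `n = 5`. -/
lemma expo_deriv_bound (μ : ℝ) (α : ℂ) (hα : α = -Complex.I * μ / 2) (u : ℝ → ℂ)
    (hAp : ∃ x₀ : ℝ, 0 < x₀ ∧ ∃ K : ℝ, 0 < K ∧ ∀ x : ℝ, x₀ ≤ x →
      ‖u x - α / x - 2 * α * (1 - α ^ 2) * (x : ℂ) ^ (-4 : ℤ)
        - 4 * α * (1 - α ^ 2) * (10 - 3 * α ^ 2) * (x : ℂ) ^ (-7 : ℤ)‖
        ≤ K * x ^ (-10 : ℤ)) :
    ∃ x₀ : ℝ, 0 < x₀ ∧ ∃ K : ℝ, 0 ≤ K ∧ ∀ x : ℝ, x₀ ≤ x →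
      ‖((2 / cbrt3 : ℝ) : ℂ) * u (x / cbrt3) + Complex.I * μ / x
        + 3 * ((2 + Complex.I * μ) * (Complex.I * μ + (μ:ℂ) ^ 2 / 2)) / (x : ℂ) ^ 4‖
        ≤ K * ((5 : ℕ) + 1) / x ^ (5 + 2) := by
  obtain ⟨x₀, hx₀, K, hK, h⟩ := hAp
  have hc := cbrt3_pos
  set D := 4 * α * (1 - α ^ 2) * (10 - 3 * α ^ 2) with hD
  refine ⟨cbrt3 * max x₀ 1, by positivity, 2 / cbrt3 * ((K + ‖D‖) * cbrt3 ^ 7) / 6,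
    by positivity, fun x hx => ?_⟩
  obtain ⟨s, rfl⟩ : ∃ s, x = cbrt3 * s := ⟨x / cbrt3, by field_simp⟩
  have hs : max x₀ 1 ≤ s := le_of_mul_le_mul_left hx hc
  have hs1 : 1 ≤ s := (le_max_right _ _).trans hs
  have hs0 : 0 < s := by linarith
  have hsc : (s : ℂ) ≠ 0 := by exact_mod_cast hs0.ne'
  have hcc : (cbrt3 : ℂ) ≠ 0 := by exact_mod_cast hc.ne'
  have hc3 : (cbrt3 : ℂ) ^ 3 = 3 := by exact_mod_cast cbrt3_cube
  have h' := h s ((le_max_left _ _).trans hs)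
  rw [mul_div_cancel_left₀ s hc.ne']
  set R := u s - α / s - 2 * α * (1 - α ^ 2) * (s : ℂ) ^ (-4 : ℤ) - D * (s : ℂ) ^ (-7 : ℤ) with hR
  have hz4 : (s : ℂ) ^ (-4 : ℤ) = 1 / (s : ℂ) ^ 4 := by
    rw [zpow_neg, one_div]; norm_cast
  have hz7 : (s : ℂ) ^ (-7 : ℤ) = 1 / (s : ℂ) ^ 7 := by
    rw [zpow_neg, one_div]; norm_cast
  have hz10 : s ^ (-10 : ℤ) = 1 / s ^ 10 := by
    rw [zpow_neg, one_div]; norm_cast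
  have hI : Complex.I ^ 2 = -1 := Complex.I_sq
  have h3 : 3 * ((2 + Complex.I * μ) * (Complex.I * μ + (μ:ℂ) ^ 2 / 2)) / (cbrt3 * s : ℂ) ^ 4
      = -(2 / cbrt3 * (2 * α * (1 - α ^ 2) / (s : ℂ) ^ 4)) := by
    have h4 : (cbrt3 * s : ℂ) ^ 4 = 3 * cbrt3 * (s : ℂ) ^ 4 := by
      rw [mul_pow, pow_succ, hc3]
    rw [h4, hα]
    field_simp
    linear_combination (2 * (μ : ℂ) ^ 2 + (μ : ℂ) ^ 3 * Complex.I) * hI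
  have heq : ((2 / cbrt3 : ℝ) : ℂ) * u s + Complex.I * μ / ((cbrt3 * s : ℝ) : ℂ)
        + 3 * ((2 + Complex.I * μ) * (Complex.I * μ + (μ:ℂ) ^ 2 / 2)) / ((cbrt3 * s : ℝ) : ℂ) ^ 4
      = ((2 / cbrt3 : ℝ) : ℂ) * (R + D / (s : ℂ) ^ 7) := by
    push_cast
    rw [h3, hR, hz4, hz7, hα]
    field_simp
    ring
  rw [heq, norm_mul, Complex.norm_real, Real.norm_of_nonneg (by positivity)]
  have hbd : ‖R + D / (s : ℂ) ^ 7‖ ≤ (K + ‖D‖) / s ^ 7 := by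
    have hd : ‖D / (s : ℂ) ^ 7‖ = ‖D‖ / s ^ 7 := by simp [abs_of_pos hs0]
    have hp : s ^ 7 ≤ s ^ 10 := pow_le_pow_right₀ hs1 (by norm_num)
    calc _ ≤ K * (1 / s ^ 10) + ‖D‖ / s ^ 7 := by
          rw [← hd, ← hz10]; exact (norm_add_le _ _).trans (by gcongr)
      _ ≤ K * (1 / s ^ 7) + ‖D‖ / s ^ 7 := by gcongr
      _ = _ := by ring
  calc _ ≤ 2 / cbrt3 * ((K + ‖D‖) / s ^ 7) := by gcongr
    _ = _ := by
      push_cast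
      field_simp
      try norm_num
      try ring

/-- With `g₊ = lim_{x→+∞} g(x)`, one has
`w'(x) e^{iμ ln x} = (1-iμ) g₊ + (2+iμ)(1-iμ) g₊ (iμ + μ²/2) x⁻³ + O(x⁻⁶)` as `x → +∞`. -/
theorem stmt_8 (μ : ℝ) (α : ℂ) (hα : α = -Complex.I * μ / 2)
    (u : ℝ → ℂ) (hu : ContDiff ℝ (⊤ : ℕ∞) u)
    (hP : ∀ x : ℝ, deriv (deriv u) x = (x : ℂ) * u x + 2 * (u x) ^ 3 - α)
    (him : ∀ x : ℝ, (u x).re = 0)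
    (hAp : ∃ x₀ : ℝ, 0 < x₀ ∧ ∃ K : ℝ, 0 < K ∧ ∀ x : ℝ, x₀ ≤ x →
      ‖u x - α / x - 2 * α * (1 - α ^ 2) * (x : ℂ) ^ (-4 : ℤ)
        - 4 * α * (1 - α ^ 2) * (10 - 3 * α ^ 2) * (x : ℂ) ^ (-7 : ℤ)‖
        ≤ K * x ^ (-10 : ℤ))
    (Cc : ℂ)
    (hC : Cc = (2 * cbrt3 / (1 - Complex.I * μ)) * (deriv u 0 - (u 0) ^ 2))
    (w : ℝ → ℂ)
    (hw : ∀ x : ℝ, w x =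
      (∫ y in (0:ℝ)..x, Complex.exp (((2 / cbrt3 : ℝ) : ℂ) *
        ∫ z in (0:ℝ)..y, u (z / cbrt3))) - Cc)
    (g : ℝ → ℂ)
    (hg : ∀ x : ℝ, x ≠ 0 →
      g x = Complex.exp (Complex.I * μ * Real.log |x|) * w x / x)
    (gp : ℂ) (hgp : Filter.Tendsto g Filter.atTop (nhds gp)) :
    ∃ x₁ : ℝ, 0 < x₁ ∧ ∃ K' : ℝ, 0 < K' ∧ ∀ x : ℝ, x₁ ≤ x →
      ‖deriv w x * Complex.exp (Complex.I * μ * Real.log x)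
        - (1 - Complex.I * μ) * gp
        - (2 + Complex.I * μ) * (1 - Complex.I * μ) * gp *
            (Complex.I * μ + (μ:ℂ) ^ 2 / 2) * (x : ℂ) ^ (-3 : ℤ)‖
        ≤ K' * x ^ (-6 : ℤ) := by
  have hcu : Continuous u := hu.continuous
  set b : ℂ := (2 + Complex.I * μ) * (Complex.I * μ + (μ:ℂ) ^ 2 / 2) with hb
  obtain ⟨x₀, hx₀, K, hK, hbound⟩ := expo_deriv_bound μ α hα u hAp
  have hwd : ∀ x, HasDerivAt w (Complex.exp (expo u x)) x := by
    intro x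
    have hc : Continuous (fun y => Complex.exp (expo u y)) :=
      (continuous_iff_continuousAt.2 fun y => (hasDerivAt_expo u hcu y).continuousAt).cexp
    have h := (hc.integral_hasStrictDerivAt 0 x).hasDerivAt.sub_const Cc
    have hfun : w = fun x => (∫ y in (0:ℝ)..x, Complex.exp (expo u y)) - Cc := funext hw
    rw [hfun]
    exact h
  set h : ℝ → ℂ := fun x => expo u x + Complex.I * μ * (Real.log x : ℂ) with hh
  have hFd : ∀ x, x₀ ≤ x → HasDerivAt (fun x : ℝ => h x - b / (x : ℂ) ^ 3)
      (((2 / cbrt3 : ℝ) : ℂ) * u (x / cbrt3) + Complex.I * μ / x + 3 * b / (x : ℂ) ^ 4) x := by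
    intro x hx
    have hxp : x ≠ 0 := (hx₀.trans_le hx).ne'
    have hxc : (x : ℂ) ≠ 0 := by exact_mod_cast hxp
    have h1 := (hasDerivAt_expo u hcu x).add (hasDerivAt_mu_log μ x hxp)
    have h2 := (((hasDerivAt_id x).ofReal_comp.pow 3).inv (pow_ne_zero 3 hxc)).const_mul b
    refine (h1.sub h2).congr_deriv ?_
    simp only [id, Complex.ofReal_one]
    field_simp
    try norm_num
    try ring
  obtain ⟨L, hL⟩ := exists_limit_of_deriv_bound 5 x₀ K hx₀ hK _ _ hFd hbound
  obtain ⟨x₁, hx01, hx1, K', hK', hexp⟩ := exp_expansion h b L x₀ K hK hL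
  have hwe : ∀ x, Complex.exp (expo u x) * Complex.exp (Complex.I * μ * Real.log x)
      = Complex.exp (h x) := fun x => (Complex.exp_add _ _).symm
  have hlim := limit_identification μ w _ (Complex.exp L) x₁ (K' + ‖Complex.exp L * b‖)
    (by linarith) (by positivity) hwd (by
      intro x hx
      have hx' : 1 ≤ x := hx1.trans hx
      have hxp : 0 < x := by linarith
      have hp : x ^ 3 ≤ x ^ 6 := pow_le_pow_right₀ hx' (by norm_num)
      have hd : ‖Complex.exp L * b / (x : ℂ) ^ 3‖ = ‖Complex.exp L * b‖ / x ^ 3 := by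
        simp [abs_of_pos hxp]
      rw [hwe]
      have h1 := norm_add_le (Complex.exp (h x) - Complex.exp L - Complex.exp L * b / (x : ℂ) ^ 3)
        (Complex.exp L * b / (x : ℂ) ^ 3)
      rw [sub_add_cancel, hd] at h1
      have h2 : K' / x ^ 6 ≤ K' / x ^ 3 := by gcongr
      have h3 := hexp x hx
      rw [add_div]
      linarith)
  have hgp' : Tendsto g atTop (𝓝 (Complex.exp L / (1 - Complex.I * μ))) := by
    refine hlim.congr' ?_
    filter_upwards [eventually_gt_atTop 0] with x hx
    rw [hg x hx.ne', abs_of_pos hx]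
  have hA : (1 - Complex.I * μ) * gp = Complex.exp L := by
    rw [tendsto_nhds_unique hgp hgp', mul_div_cancel₀ _ (one_sub_I_mul_ne_zero μ)]
  refine ⟨x₁, by linarith, K', hK', fun x hx => ?_⟩
  have hz3 : (x : ℂ) ^ (-3 : ℤ) = 1 / (x : ℂ) ^ 3 := by
    rw [zpow_neg, one_div]; norm_cast
  have hz6 : x ^ (-6 : ℤ) = 1 / x ^ 6 := by
    rw [zpow_neg, one_div]; norm_cast
  rw [(hwd x).deriv, hwe, hz3, hz6, mul_one_div K']
  convert hexp x hx using 2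
  rw [← hA, hb]
  ring
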